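/- Let G be a finite subgroup of SL(2,ℂ). If G is not abelian, then G contains the matrix −I (the negative of the 2×2 identity matrix). -/

import Mathlib

/-- If two 2×2 matrices commute with `M` but not with each other then `M` is scalar. -/
theorem scalar_of_commute (M a b : Matrix (Fin 2) (Fin 2) ℂ)
    (ha : a * M = M * a) (hb : b * M = M * b) (hab : a * b ≠ b * a) :
    M 0 1 = 0 ∧ M 1 0 = 0 ∧ M 0 0 = M 1 1 := by
  have key : ∀ X Y : Matrix (Fin 2) (Fin 2) ℂ, X * Y = Y * X ↔
      (X 0 1 * Y 1 0 = Y 0 1 * X 1 0 ∧ X 0 1 * (Y 0 0 - Y 1 1) = Y 0 1 * (X 0 0 - X 1 1)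
        ∧ X 1 0 * (Y 0 0 - Y 1 1) = Y 1 0 * (X 0 0 - X 1 1)) := by
    intro X Y
    rw [← Matrix.ext_iff]
    simp only [Fin.forall_fin_two, Matrix.mul_apply, Fin.sum_univ_two]
    constructor
    · rintro ⟨⟨h1, h2⟩, h3, h4⟩
      refine ⟨?_, ?_, ?_⟩
      · linear_combination h1
      · linear_combination -h2
      · linear_combination h3
    · rintro ⟨h1, h2, h3⟩
      refine ⟨⟨?_, ?_⟩, ?_, ?_⟩
      · linear_combination h1
      · linear_combination -h2
      · linear_combination h3
      · linear_combination -h1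
  rw [key] at ha hb
  rw [Ne, key] at hab
  rw [← sub_eq_zero (a := M 0 0)]
  generalize M 0 0 - M 1 1 = d at *
  generalize a 0 0 - a 1 1 = r at *
  generalize b 0 0 - b 1 1 = u at *
  generalize M 0 1 = m at *
  generalize M 1 0 = n at *
  generalize a 0 1 = p at *
  generalize a 1 0 = q at *
  generalize b 0 1 = s at *
  generalize b 1 0 = t at *
  obtain ⟨a1, a2, a3⟩ := ha
  obtain ⟨b1, b2, b3⟩ := hb
  refine ⟨?_, ?_, ?_⟩
  · by_contra hm
    refine hab ⟨mul_left_cancel₀ hm ?_, mul_left_cancel₀ hm ?_, mul_left_cancel₀ hm ?_⟩ <;> grind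
  · by_contra hm
    refine hab ⟨mul_left_cancel₀ hm ?_, mul_left_cancel₀ hm ?_, mul_left_cancel₀ hm ?_⟩ <;> grind
  · by_contra hm
    refine hab ⟨mul_left_cancel₀ hm ?_, mul_left_cancel₀ hm ?_, mul_left_cancel₀ hm ?_⟩ <;> grind

theorem nonabelian_odd_false
    (G : Subgroup (Matrix.SpecialLinearGroup (Fin 2) ℂ)) [Fintype G]
    (h : ¬ ∀ a ∈ G, ∀ b ∈ G, a * b = b * a) (hodd : (Nat.card G).Coprime 2) : False := by
  classical
  push Not at h
  obtain ⟨a, ha, b, hb, hab⟩ := h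
  have hab' : (a : Matrix (Fin 2) (Fin 2) ℂ) * b ≠ b * a := fun e => hab (Subtype.ext (by simpa using e))
  let ρ : G →* Matrix (Fin 2) (Fin 2) ℂ :=
      { toFun := fun g => ((g : Matrix.SpecialLinearGroup (Fin 2) ℂ) : Matrix (Fin 2) (Fin 2) ℂ)
        map_one' := by simp
        map_mul' := by intros; simp }
  have hdet : ∀ g, ρ g 0 0 * ρ g 1 1 - ρ g 0 1 * ρ g 1 0 = 1 := fun g => by
    have := g.1.2
    rwa [Matrix.det_fin_two] at this
  have hinv : ∀ g, ρ g⁻¹ = !![ρ g 1 1, - ρ g 0 1; - ρ g 1 0, ρ g 0 0] := fun g => by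
    change ((g.1⁻¹ : Matrix.SpecialLinearGroup (Fin 2) ℂ) : Matrix (Fin 2) (Fin 2) ℂ) = _
    rw [Matrix.SpecialLinearGroup.coe_inv, Matrix.adjugate_fin_two]
    rfl
  have scal : ∀ M : Matrix (Fin 2) (Fin 2) ℂ, (∀ g, ρ g * M = M * ρ g) →
      M 0 1 = 0 ∧ M 1 0 = 0 ∧ M 0 0 = M 1 1 := fun M hM =>
    scalar_of_commute M a b (hM ⟨a, ha⟩) (hM ⟨b, hb⟩) hab'
  have avg : ∀ X : Matrix (Fin 2) (Fin 2) ℂ, ∀ h, ρ h * (∑ g, ρ g * X * ρ g⁻¹) =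
      (∑ g, ρ g * X * ρ g⁻¹) * ρ h := by
    intro X h
    rw [Finset.mul_sum, Finset.sum_mul]
    refine Fintype.sum_equiv (Equiv.mulLeft h) _ _ fun g => ?_
    simp only [Equiv.coe_mulLeft, mul_inv_rev, map_mul]
    have : ρ h⁻¹ * ρ h = 1 := by rw [← map_mul]; simp
    simp only [mul_assoc, this, mul_one]
  have hsum : ∀ h, ρ h * (∑ g, ρ g) = ∑ g, ρ g := by
    intro h
    rw [Finset.mul_sum]
    exact Fintype.sum_equiv (Equiv.mulLeft h) _ _ fun g => by simp
  have hsum' : ∀ h, (∑ g, ρ g) * ρ h = ∑ g, ρ g := by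
    intro h
    rw [Finset.sum_mul]
    exact Fintype.sum_equiv (Equiv.mulRight h) _ _ fun g => by simp
  have hP : (∑ g, ρ g) 0 0 = 0 ∧ (∑ g, ρ g) 1 1 = 0 := by
    obtain ⟨h1, h2, h3⟩ := scal _ fun h => (hsum h).trans (hsum' h).symm
    rw [← h3, and_self]
    by_contra hc
    set P := ∑ g, ρ g
    have hPs : P = P 0 0 • (1 : Matrix (Fin 2) (Fin 2) ℂ) := by
      ext i j
      fin_cases i <;> fin_cases j <;> simp [h1, h2, h3]
    have one : ∀ g, ρ g = 1 := fun g => by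
      have := hsum g
      rw [hPs, mul_smul_comm, mul_one] at this
      exact smul_right_injective _ hc this
    apply hab'
    have h1 := one ⟨a, ha⟩
    have h2 := one ⟨b, hb⟩
    change (a : Matrix (Fin 2) (Fin 2) ℂ) = 1 at h1
    change (b : Matrix (Fin 2) (Fin 2) ℂ) = 1 at h2
    rw [h1, h2]
  have hsq : ∑ g : G, (ρ g 0 0 + ρ g 1 1) = ∑ g : G, (ρ (g ^ 2) 0 0 + ρ (g ^ 2) 1 1) :=
    (Fintype.sum_equiv (powCoprime hodd) _ _ fun g => rfl).symm
  have hz : ∑ g : G, (ρ g 0 0 + ρ g 1 1) = 0 := by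
    rw [Finset.sum_add_distrib, ← Matrix.sum_apply, ← Matrix.sum_apply, hP.1, hP.2, add_zero]
  have e0 := scal _ (avg !![1, 0; 0, 0])
  have e1 := scal _ (avg !![0, 1; 0, 0])
  have e2 := scal _ (avg !![0, 0; 1, 0])
  have e3 := scal _ (avg !![0, 0; 0, 1])
  simp only [hinv, Matrix.sum_apply, Matrix.mul_apply, Fin.sum_univ_two, Matrix.of_apply,
    Matrix.cons_val', Matrix.cons_val_zero, Matrix.cons_val_one, Matrix.cons_val_fin_one,
    mul_one, mul_zero, add_zero, zero_add] at e0 e1 e2 e3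
  have hsq2 : ∀ g, ρ (g ^ 2) 0 0 + ρ (g ^ 2) 1 1 =
      ρ g 0 0 ^ 2 + 2 * (ρ g 0 1 * ρ g 1 0) + ρ g 1 1 ^ 2 := fun g => by
    rw [map_pow, pow_two]
    simp only [Matrix.mul_apply, Fin.sum_univ_two]
    ring
  simp only [hz, hsq2] at hsq
  have hc : ∑ g : G, (1 : ℂ) ≠ 0 := by simp
  have hd : ∑ g : G, (ρ g 0 0 * ρ g 1 1 - ρ g 0 1 * ρ g 1 0) = ∑ g : G, (1 : ℂ) := by simp [hdet]
  have f0 := e0.2.2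
  have f1 := e1.1
  have f2 := e2.2.1
  simp only [zero_mul, add_zero, zero_add, neg_zero, mul_neg, Finset.sum_neg_distrib] at f0 f1 f2
  have comm : ∑ g, ρ g 1 0 * ρ g 0 1 = ∑ g, ρ g 0 1 * ρ g 1 0 :=
    Finset.sum_congr rfl fun g _ => mul_comm _ _
  rw [comm] at f0
  rw [Finset.sum_sub_distrib] at hd
  simp only [pow_two] at hsq
  rw [Finset.sum_add_distrib, Finset.sum_add_distrib, ← Finset.mul_sum, f1, f2] at hsq
  apply hc
  linear_combination -hd + f0 + hsq

/-- Let `G` be a finite subgroup of `SL(2,ℂ)`. If `G` is not abelian, then `G` contains the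
matrix `-I` (the negative of the 2×2 identity matrix). -/
theorem nonabelian_finite_subgroup_SL2_contains_neg_one
    (G : Subgroup (Matrix.SpecialLinearGroup (Fin 2) ℂ)) [Finite G]
    (h : ¬ ∀ a ∈ G, ∀ b ∈ G, a * b = b * a) :
    ∃ A ∈ G, (A : Matrix (Fin 2) (Fin 2) ℂ) = -1 := by
  have := Fintype.ofFinite G
  by_cases hodd : (Nat.card G).Coprime 2
  · exact (nonabelian_odd_false G h hodd).elim
  have h2 : 2 ∣ Nat.card G := by
    rw [Nat.coprime_comm, Nat.prime_two.coprime_iff_not_dvd, not_not] at hodd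
    exact hodd
  have : Fact (Nat.Prime 2) := ⟨Nat.prime_two⟩
  obtain ⟨x, hx⟩ := exists_prime_orderOf_dvd_card' 2 h2
  refine ⟨x, x.2, ?_⟩
  have hx1 : x ≠ 1 := by rintro rfl; simp at hx
  have hxx : x ^ 2 = 1 := by
    rw [← orderOf_dvd_iff_pow_eq_one, hx]
  have hm : (x.1 : Matrix (Fin 2) (Fin 2) ℂ) * x.1 = 1 := by
    have := congrArg (fun y : G => (y.1 : Matrix (Fin 2) (Fin 2) ℂ)) hxx
    simpa [pow_two] using this
  have hne : (x.1 : Matrix (Fin 2) (Fin 2) ℂ) ≠ 1 := fun e =>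
    hx1 (Subtype.ext (Subtype.ext (by simpa using e)))
  have hdet := x.1.2
  generalize (x.1 : Matrix (Fin 2) (Fin 2) ℂ) = M at *
  have hadj : M = M.adjugate := by
    calc M = M * (M * M.adjugate) := by rw [Matrix.mul_adjugate, hdet]; simp
      _ = M.adjugate := by rw [← mul_assoc, hm, one_mul]
  have hM : ∀ i j, M i j = M.adjugate i j := fun i j => by rw [← hadj]
  have e1 := hM 0 0
  have e2 := hM 0 1
  have e3 := hM 1 0
  simp only [Matrix.adjugate_fin_two, Matrix.of_apply,
    Matrix.cons_val', Matrix.cons_val_zero, Matrix.cons_val_one, Matrix.cons_val_fin_one] at e1 e2 e3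
  have z2 : M 0 1 = 0 := self_eq_neg.1 e2
  have z3 : M 1 0 = 0 := self_eq_neg.1 e3
  rw [Matrix.det_fin_two, z2, ← e1, zero_mul, sub_zero] at hdet
  rcases mul_self_eq_one_iff.1 hdet with h0 | h0
  · refine (hne ?_).elim
    ext i j
    fin_cases i <;> fin_cases j <;> simp [z2, z3, h0, ← e1]
  · ext i j
    fin_cases i <;> fin_cases j <;> simp [z2, z3, h0, ← e1]
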